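/- arXiv:1909.12020 — 2 statements merged into one kernel-verified Lean document; each statement's English description precedes it below -/
import Mathlib

section
/- Let p > 0, ρ > 0, and let x† = f_p(T*T)w with ‖w‖ ≤ ρ. Then there exist C > 0 and δ̄ ∈ (0,1) such that for every δ ∈ (0,δ̄] and every y^δ ∈ Y with ‖y^δ − T x†‖ ≤ δ, the regularized solution x(δ) = g_δ(T*T)T*y^δ obtained with the a-priori parameter choice α(δ) = δ satisfies ‖x† − x(δ)‖ ≤ C·(−ln δ)^{−p}. -/
open ContinuousLinearMap

/-- The generator function `g_α(λ) = 1/(λ + (1 − λ^{√α})²)` with `g_α(0) = 1`,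
where `λ^{√α} = exp(√α · log λ)`. -/
noncomputable def genFun (α : ℝ) : ℝ → ℝ := fun t =>
  if t = 0 then 1 else 1 / (t + (1 - Real.exp (Real.sqrt α * Real.log t)) ^ 2)

/-- `f_p(λ) = (−log λ)^{−p}` (with `f_p(0) = 0`). -/
noncomputable def fpFun (p : ℝ) : ℝ → ℝ := fun t => (-Real.log t) ^ (-p)


lemma aux_genFun_eq (δ t : ℝ) (hδ : 0 < δ) (ht : 0 ≤ t) :
    genFun δ t = 1 / (t + (1 - t ^ (Real.sqrt δ)) ^ 2) := by
  have hs : 0 < Real.sqrt δ := Real.sqrt_pos.2 hδ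
  unfold genFun
  split_ifs with h
  · subst h
    rw [Real.zero_rpow hs.ne']; norm_num
  · rw [Real.rpow_def_of_pos (lt_of_le_of_ne ht (Ne.symm h)), mul_comm (Real.log t)]

/-- `u = 1 - t^s ≥ s/2`. -/
lemma aux_u_lower (s t : ℝ) (hs : 0 < s) (hs1 : s ≤ 1) (ht : 0 ≤ t)
    (ht1 : t ≤ Real.exp (-1)) : s / 2 ≤ 1 - t ^ s := by
  have h1 : t ^ s ≤ Real.exp (-s) := by
    calc t ^ s ≤ (Real.exp (-1)) ^ s := Real.rpow_le_rpow ht ht1 hs.le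
      _ = Real.exp (-s) := by rw [← Real.exp_mul]; ring_nf
  have h2 : Real.exp (-s) ≤ 1 / (1 + s) := by
    rw [Real.exp_neg, ← one_div]
    apply one_div_le_one_div_of_le (by linarith)
    linarith [Real.add_one_le_exp s]
  have h3 : 1 / (1 + s) ≤ 1 - s / 2 := by
    rw [div_le_iff₀ (by linarith)]
    nlinarith
  linarith

lemma aux_u_upper (s t : ℝ) (ht : 0 < t) :
    1 - t ^ s ≤ s * (-Real.log t) := by
  rw [Real.rpow_def_of_pos ht]
  have := Real.add_one_le_exp (Real.log t * s)
  linarith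

lemma aux_den_pos (s t : ℝ) (hs : 0 < s) (hs1 : s ≤ 1) (ht : 0 ≤ t)
    (ht1 : t ≤ Real.exp (-1)) : 0 < t + (1 - t ^ s) ^ 2 := by
  have := aux_u_lower s t hs hs1 ht ht1
  have : 0 < 1 - t ^ s := by linarith
  positivity

lemma aux_cont_gen (δ : ℝ) (hδ : 0 < δ) (hδ1 : δ ≤ 1) :
    ContinuousOn (genFun δ) (Set.Icc 0 (Real.exp (-1))) := by
  have hs : 0 < Real.sqrt δ := Real.sqrt_pos.2 hδ
  have hs1 : Real.sqrt δ ≤ 1 := Real.sqrt_le_one.2 hδ1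
  have : ContinuousOn (fun t : ℝ => 1 / (t + (1 - t ^ (Real.sqrt δ)) ^ 2))
      (Set.Icc 0 (Real.exp (-1))) := by
    have hc := Real.continuous_rpow_const (q := Real.sqrt δ) hs.le
    apply ContinuousOn.div continuousOn_const
    · exact (by fun_prop : Continuous fun t : ℝ => t + (1 - t ^ (Real.sqrt δ)) ^ 2).continuousOn
    · intro t ht
      exact (aux_den_pos _ t hs hs1 ht.1 ht.2).ne'
  exact this.congr fun t ht => aux_genFun_eq δ t hδ ht.1

lemma aux_log (t : ℝ) (ht : 0 < t) (ht1 : t ≤ Real.exp (-1)) : 1 ≤ -Real.log t := by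
  have := Real.log_le_log ht ht1
  rw [Real.log_exp] at this
  linarith

lemma aux_cont_fp (p : ℝ) (hp : 0 < p) :
    ContinuousOn (fpFun p) (Set.Icc 0 (Real.exp (-1))) := by
  intro t ht
  rcases ht.1.eq_or_lt with h | h
  · subst h
    have h0 : fpFun p 0 = 0 := by
      unfold fpFun
      rw [Real.log_zero, neg_zero, Real.zero_rpow (by linarith)]
    have hlim : Filter.Tendsto (fpFun p) (nhdsWithin 0 {0}ᶜ) (nhds 0) :=
      (tendsto_rpow_neg_atTop hp).comp
        (Filter.tendsto_neg_atBot_atTop.comp Real.tendsto_log_nhdsNE_zero)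
    have : ContinuousAt (fpFun p) 0 := by
      rw [continuousAt_iff_punctured_nhds, h0]
      exact hlim
    exact this.continuousWithinAt
  · have hL := aux_log t h ht.2
    apply ContinuousAt.continuousWithinAt
    unfold fpFun
    apply ContinuousAt.rpow_const
    · exact (Real.continuousAt_log h.ne').neg
    · left; linarith

/-- noise bound -/
lemma aux_noise (δ t : ℝ) (hδ : 0 < δ) (hδ1 : δ ≤ 1) (ht : 0 ≤ t)
    (ht1 : t ≤ Real.exp (-1)) : |genFun δ t * t * genFun δ t| ≤ 1 / δ := by
  have hs : 0 < Real.sqrt δ := Real.sqrt_pos.2 hδ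
  have hs1 : Real.sqrt δ ≤ 1 := Real.sqrt_le_one.2 hδ1
  have hsq : Real.sqrt δ ^ 2 = δ := Real.sq_sqrt hδ.le
  rw [aux_genFun_eq δ t hδ ht]
  have hu := aux_u_lower _ t hs hs1 ht ht1
  have hD := aux_den_pos _ t hs hs1 ht ht1
  set u := 1 - t ^ Real.sqrt δ
  rw [abs_of_nonneg (by positivity)]
  have hu2 : δ ≤ 4 * u ^ 2 := by nlinarith
  have : 1 / (t + u ^ 2) * t * (1 / (t + u ^ 2)) = t / (t + u ^ 2) ^ 2 := by
    field_simp
  rw [this, div_le_div_iff₀ (by positivity) hδ]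
  nlinarith [sq_nonneg (t - u ^ 2)]

/-- bias bound -/
lemma aux_bias (p δ t : ℝ) (hp : 0 < p) (hδ : 0 < δ) (hδ1 : δ ≤ Real.exp (-1)) (ht : 0 ≤ t)
    (ht1 : t ≤ Real.exp (-1))
    (hsmall : Real.sqrt δ * (-Real.log δ) ^ 2 ≤ (-Real.log δ) ^ (-p)) :
    |fpFun p t - genFun δ t * t * fpFun p t| ≤ (2 ^ p + 1) * (-Real.log δ) ^ (-p) := by
  have he : Real.exp (-1) ≤ 1 := by rw [Real.exp_le_one_iff]; norm_num
  have hl := aux_log δ hδ hδ1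
  have hs : 0 < Real.sqrt δ := Real.sqrt_pos.2 hδ
  have hs1 : Real.sqrt δ ≤ 1 := Real.sqrt_le_one.2 (hδ1.trans he)
  have hlp : 0 < (-Real.log δ) ^ (-p) := Real.rpow_pos_of_pos (by linarith) _
  have h2p : (0 : ℝ) < 2 ^ p := by positivity
  rcases ht.eq_or_lt with h | h
  · subst h
    have h0 : fpFun p 0 = 0 := by
      unfold fpFun
      rw [Real.log_zero, neg_zero, Real.zero_rpow (by linarith)]
    rw [h0]; simp; positivity
  have hL := aux_log t h ht1
  rw [aux_genFun_eq δ t hδ ht]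
  have hu := aux_u_lower _ t hs hs1 ht ht1
  have hu' := aux_u_upper (Real.sqrt δ) t h
  have hD := aux_den_pos _ t hs hs1 ht ht1
  have hfp : 0 < fpFun p t := Real.rpow_pos_of_pos (by linarith) _
  set u := 1 - t ^ Real.sqrt δ
  have hr : fpFun p t - 1 / (t + u ^ 2) * t * fpFun p t = u ^ 2 / (t + u ^ 2) * fpFun p t := by
    field_simp; ring
  rw [hr, abs_of_nonneg (by positivity)]
  have hlogs : Real.log (Real.sqrt δ) = Real.log δ / 2 := Real.log_sqrt hδ.le
  rcases le_total (Real.sqrt δ) t with hc | hc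
  · have hLl : -Real.log t ≤ -Real.log δ := by
      have := Real.log_le_log hs hc
      linarith
    have hf1 : fpFun p t ≤ 1 := Real.rpow_le_one_of_one_le_of_nonpos hL (by linarith)
    have hub : u ≤ Real.sqrt δ * (-Real.log δ) := hu'.trans (by gcongr)
    have hr1 : u ^ 2 / (t + u ^ 2) ≤ Real.sqrt δ * (-Real.log δ) ^ 2 := by
      rw [div_le_iff₀ hD]
      have h1 : u ^ 2 ≤ (Real.sqrt δ * (-Real.log δ)) ^ 2 := by
        apply pow_le_pow_left₀ _ hub
        linarith
      have h2 : Real.sqrt δ * (-Real.log δ) ^ 2 * Real.sqrt δ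
          ≤ Real.sqrt δ * (-Real.log δ) ^ 2 * (t + u ^ 2) := by
        gcongr; nlinarith [sq_nonneg u]
      nlinarith
    calc _ ≤ (Real.sqrt δ * (-Real.log δ) ^ 2) * 1 := by gcongr
      _ ≤ (-Real.log δ) ^ (-p) := by linarith
      _ ≤ _ := by nlinarith
  · have hLl : -Real.log δ / 2 ≤ -Real.log t := by
      have := Real.log_le_log h hc
      linarith
    have hf : fpFun p t ≤ 2 ^ p * (-Real.log δ) ^ (-p) := by
      calc fpFun p t ≤ (-Real.log δ / 2) ^ (-p) :=
            Real.rpow_le_rpow_of_nonpos (by linarith) hLl (by linarith)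
        _ = _ := by
          rw [Real.div_rpow (by linarith) (by norm_num), Real.rpow_neg (by norm_num : (0:ℝ) ≤ 2)]
          field_simp
    have hr1 : u ^ 2 / (t + u ^ 2) ≤ 1 := by
      rw [div_le_one hD]; linarith
    calc _ ≤ 1 * (2 ^ p * (-Real.log δ) ^ (-p)) := by gcongr
      _ ≤ _ := by nlinarith

lemma aux_small (p : ℝ) : ∃ δbar ∈ Set.Ioo (0 : ℝ) 1, δbar ≤ Real.exp (-1) ∧
    ∀ δ ∈ Set.Ioc (0 : ℝ) δbar, Real.sqrt δ * (-Real.log δ) ^ 2 ≤ (-Real.log δ) ^ (-p) := by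
  have h := tendsto_rpow_mul_exp_neg_mul_atTop_nhds_zero (p + 2) (1 / 2) (by norm_num)
  have h1 := h.eventually (gt_mem_nhds (zero_lt_one' ℝ))
  obtain ⟨M, hM⟩ := Filter.eventually_atTop.1 h1
  refine ⟨Real.exp (-(max M 1)), ⟨Real.exp_pos _, ?_⟩, ?_, ?_⟩
  · rw [Real.exp_lt_one_iff]
    linarith [le_max_right M 1]
  · apply Real.exp_le_exp.2
    linarith [le_max_right M 1]
  · rintro δ ⟨h0, hle⟩
    have hl : max M 1 ≤ -Real.log δ := by
      have := Real.log_le_log h0 hle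
      rw [Real.log_exp] at this; linarith
    have hl1 : 1 ≤ -Real.log δ := (le_max_right _ _).trans hl
    have := hM _ ((le_max_left _ _).trans hl)
    have hs : Real.sqrt δ = Real.exp (-(1 / 2) * -Real.log δ) := by
      rw [Real.sqrt_eq_rpow, Real.rpow_def_of_pos h0]; ring_nf
    rw [← hs, Real.rpow_add (by linarith), Real.rpow_two] at this
    rw [Real.rpow_neg (by linarith), ← one_div, le_div_iff₀ (Real.rpow_pos_of_pos (by linarith) _)]
    linarith

/-- Let `p > 0`, `ρ > 0`, and let `x† = f_p(T*T)w` with `‖w‖ ≤ ρ`, where `T` is a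
bounded injective operator between complex Hilbert spaces with `‖T*T‖ ≤ e⁻¹`.
Then there exist `C > 0` and `δ̄ ∈ (0,1)` such that for every `δ ∈ (0,δ̄]` and every
`y^δ` with `‖y^δ − T x†‖ ≤ δ`, the regularized solution `x(δ) = g_δ(T*T)T*y^δ`
obtained with the a-priori parameter choice `α(δ) = δ` satisfies
`‖x† − x(δ)‖ ≤ C·(−log δ)^{−p}`. -/
theorem stmt10 {X Y : Type*} [NormedAddCommGroup X] [InnerProductSpace ℂ X]
    [CompleteSpace X] [NormedAddCommGroup Y] [InnerProductSpace ℂ Y] [CompleteSpace Y]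
    (T : X →L[ℂ] Y) (hTinj : Function.Injective T)
    (hTnorm : ‖(adjoint T) ∘L T‖ ≤ Real.exp (-1))
    (p ρ : ℝ) (hp : 0 < p) (hρ : 0 < ρ)
    (w : X) (hw : ‖w‖ ≤ ρ) (xdag : X) (hxdag : xdag = cfc (fpFun p) ((adjoint T) ∘L T) w) :
    ∃ C > (0 : ℝ), ∃ δbar ∈ Set.Ioo (0 : ℝ) 1, ∀ δ ∈ Set.Ioc (0 : ℝ) δbar, ∀ yδ : Y,
      ‖yδ - T xdag‖ ≤ δ →
        ‖xdag - cfc (genFun δ) ((adjoint T) ∘L T) ((adjoint T) yδ)‖ ≤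
          C * (-Real.log δ) ^ (-p) := by
  have hhelp := aux_small p
  obtain ⟨δbar, hδbar, hδe, hsm⟩ := hhelp
  set A : X →L[ℂ] X := (adjoint T) ∘L T with hA
  have hpos : A.IsPositive := isPositive_adjoint_comp_self T
  have hsa : IsSelfAdjoint A := hpos.isSelfAdjoint
  have hspec : spectrum ℝ A ⊆ Set.Icc 0 (Real.exp (-1)) := by
    intro t ht
    refine ⟨spectrum_nonneg_of_nonneg ((nonneg_iff_isPositive A).2 hpos) ht, ?_⟩
    have h1 := spectrum.norm_le_norm_mul_of_mem ht
    have h2 : ‖(1 : X →L[ℂ] X)‖ ≤ 1 := norm_id_le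
    calc t ≤ ‖t‖ := le_abs_self t
      _ ≤ ‖A‖ * ‖(1 : X →L[ℂ] X)‖ := h1
      _ ≤ ‖A‖ * 1 := by gcongr
      _ ≤ _ := by linarith
  refine ⟨(2 ^ p + 1) * ρ + 1, by positivity, δbar, hδbar, ?_⟩
  intro δ hδ yδ hy
  have hδ0 := hδ.1
  have hδ1 : δ ≤ Real.exp (-1) := hδ.2.trans hδe
  have hδ11 : δ ≤ 1 := hδ.2.trans hδbar.2.le
  have hsmall := hsm δ hδ
  have hl := aux_log δ hδ0 hδ1
  have hlp : 0 < (-Real.log δ) ^ (-p) := Real.rpow_pos_of_pos (by linarith) _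
  have hcg : ContinuousOn (genFun δ) (spectrum ℝ A) := (aux_cont_gen δ hδ0 hδ11).mono hspec
  have hcf : ContinuousOn (fpFun p) (spectrum ℝ A) := (aux_cont_fp p hp).mono hspec
  have hcid : ContinuousOn (fun t : ℝ => t) (spectrum ℝ A) := continuousOn_id
  have hcgi : ContinuousOn (fun t => genFun δ t * t) (spectrum ℝ A) := hcg.mul hcid
  have hgi : cfc (fun t => genFun δ t * t) A = cfc (genFun δ) A * A := by
    rw [cfc_mul _ _ A hcg hcid, cfc_id' ℝ A]
  set G := cfc (genFun δ) A with hG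
  set F := cfc (fpFun p) A with hF
  have hGsa : adjoint G = G := by
    have : IsSelfAdjoint G := cfc_predicate (genFun δ) A
    exact this
  have hbias : ‖F - G * A * F‖ ≤ (2 ^ p + 1) * (-Real.log δ) ^ (-p) := by
    have : F - G * A * F = cfc (fun t => fpFun p t - genFun δ t * t * fpFun p t) A := by
      have hcm : ContinuousOn (fun t => genFun δ t * t * fpFun p t) (spectrum ℝ A) := hcgi.mul hcf
      rw [cfc_sub _ _ A hcf hcm, cfc_mul _ _ A hcgi hcf, hgi]
    rw [this]
    apply norm_cfc_le (by positivity)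
    intro t ht
    exact aux_bias p δ t hp hδ0 hδ1 (hspec ht).1 (hspec ht).2 hsmall
  have hgag : ‖G * A * G‖ ≤ 1 / δ := by
    have : G * A * G = cfc (fun t => genFun δ t * t * genFun δ t) A := by
      rw [cfc_mul _ _ A hcgi hcg, hgi]
    rw [this]
    apply norm_cfc_le (by positivity)
    intro t ht
    exact aux_noise δ t hδ0 hδ11 (hspec ht).1 (hspec ht).2
  have hTG : ‖T ∘L G‖ * ‖T ∘L G‖ ≤ 1 / δ := by
    rw [← norm_adjoint_comp_self, adjoint_comp, hGsa]
    exact hgag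
  have hGT : ‖G ∘L adjoint T‖ = ‖T ∘L G‖ := by
    rw [← LinearIsometryEquiv.norm_map (adjoint (𝕜 := ℂ)) (T ∘L G), adjoint_comp, hGsa]
  have hs : 0 < Real.sqrt δ := Real.sqrt_pos.2 hδ0
  have hsq : Real.sqrt δ * Real.sqrt δ = δ := Real.mul_self_sqrt hδ0.le
  have hGTle : ‖G ∘L adjoint T‖ ≤ 1 / Real.sqrt δ := by
    rw [hGT]
    refine (pow_le_pow_iff_left₀ (norm_nonneg _) (by positivity) two_ne_zero).1 ?_
    rw [div_pow, one_pow, sq (Real.sqrt δ), hsq, sq]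
    exact hTG
  have hdecomp : xdag - G ((adjoint T) yδ)
      = (F - G * A * F) w - (G ∘L adjoint T) (yδ - T xdag) := by
    rw [map_sub, hxdag]
    simp [hA, sub_eq_add_neg]
  have hn : ‖(G ∘L adjoint T) (yδ - T xdag)‖ ≤ (-Real.log δ) ^ (-p) := by
    calc _ ≤ ‖G ∘L adjoint T‖ * ‖yδ - T xdag‖ := le_opNorm _ _
      _ ≤ 1 / Real.sqrt δ * δ := by gcongr
      _ = Real.sqrt δ := by
        rw [div_mul_eq_mul_div, one_mul, div_eq_iff hs.ne', hsq]
      _ ≤ Real.sqrt δ * (-Real.log δ) ^ 2 := by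
        apply le_mul_of_one_le_right hs.le
        exact one_le_pow₀ hl
      _ ≤ _ := hsmall
  have hb : ‖(F - G * A * F) w‖ ≤ (2 ^ p + 1) * (-Real.log δ) ^ (-p) * ρ := by
    calc _ ≤ ‖F - G * A * F‖ * ‖w‖ := le_opNorm _ _
      _ ≤ _ := by gcongr
  rw [hdecomp]
  calc _ ≤ _ := norm_sub_le _ _
    _ ≤ _ := add_le_add hb hn
    _ = _ := by ring
end

section
/- Let p > 0, ρ > 0, and let x† = f_p(T*T)w with ‖w‖ ≤ ρ. There exist C > 0 and δ̄ ∈ (0,1) such that the following holds for every δ ∈ (0,δ̄]: if y^δ ∈ Y satisfies ‖y^δ − T x†‖ ≤ δ and α > 0 is such that ‖T x_α^δ − y^δ‖ ≤ δ + √δ while ‖T x_{α'}^δ − y^δ‖ > δ + √δ for every α' > α (i.e., α is the supremum in the Morozov-like discrepancy rule α(δ,y^δ) = sup{α > 0 : ‖T x_α^δ − y^δ‖ ≤ δ + √δ}), where x_β^δ = g_β(T*T)T*y^δ, then ‖x† − x_α^δ‖ ≤ C·(−ln δ)^{−p}. -/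
open ContinuousLinearMap

section helpers
variable {X Y : Type*} [NormedAddCommGroup X] [InnerProductSpace ℂ X]
    [CompleteSpace X] [NormedAddCommGroup Y] [InnerProductSpace ℂ Y] [CompleteSpace Y]

abbrev II : Set ℝ := Set.Icc (0:ℝ) (Real.exp (-1))

lemma A_pos (T : X →L[ℂ] Y) : (0 : X →L[ℂ] X) ≤ (adjoint T) ∘L T := by
  rw [ContinuousLinearMap.nonneg_iff_isPositive]
  exact ContinuousLinearMap.isPositive_adjoint_comp_self T

lemma A_sa (T : X →L[ℂ] Y) : IsSelfAdjoint ((adjoint T) ∘L T) :=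
  IsSelfAdjoint.of_nonneg (A_pos T)

lemma A_spec (T : X →L[ℂ] Y) (hT : ‖(adjoint T) ∘L T‖ ≤ Real.exp (-1)) :
    spectrum ℝ ((adjoint T) ∘L T) ⊆ II := by
  intro t ht
  refine ⟨spectrum_nonneg_of_nonneg (A_pos T) ht, ?_⟩
  have h := spectrum.norm_le_norm_mul_of_mem ht
  have h1 : ‖(1 : X →L[ℂ] X)‖ ≤ 1 := ContinuousLinearMap.norm_id_le
  have h2 := le_abs_self t
  rw [Real.norm_eq_abs] at h
  nlinarith [norm_nonneg ((adjoint T) ∘L T)]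

lemma cfc_quad_mono (T : X →L[ℂ] Y) (hT : ‖(adjoint T) ∘L T‖ ≤ Real.exp (-1))
    {h k : ℝ → ℝ} (hh : ContinuousOn h II) (hk : ContinuousOn k II)
    (hle : ∀ t ∈ II, h t ≤ k t) (u : X) :
    (inner ℂ (cfc h ((adjoint T) ∘L T) u) u).re ≤ (inner ℂ (cfc k ((adjoint T) ∘L T) u) u).re := by
  have hs := A_spec T hT
  have h1 : cfc h ((adjoint T) ∘L T) ≤ cfc k ((adjoint T) ∘L T) :=
    cfc_mono (fun t ht => hle t (hs ht)) (hh.mono hs) (hk.mono hs)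
  have h2 := (ContinuousLinearMap.le_def _ _).1 h1
  have h3 := h2.re_inner_nonneg_left u
  simp only [_root_.sub_apply, inner_sub_left, map_sub, RCLike.re_to_complex] at h3
  linarith

lemma cfc_inner_symm (T : X →L[ℂ] Y) (h : ℝ → ℝ) (u v : X) :
    inner ℂ (cfc h ((adjoint T) ∘L T) u) v = inner ℂ u (cfc h ((adjoint T) ∘L T) v) := by
  have : IsSelfAdjoint (cfc h ((adjoint T) ∘L T)) := cfc_predicate h _
  have h2 := ContinuousLinearMap.adjoint_inner_left (cfc h ((adjoint T) ∘L T)) v u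
  rw [this.adjoint_eq] at h2
  exact h2

lemma cfc_mul_apply (T : X →L[ℂ] Y) (hT : ‖(adjoint T) ∘L T‖ ≤ Real.exp (-1))
    {h k : ℝ → ℝ} (hh : ContinuousOn h II) (hk : ContinuousOn k II) (u : X) :
    cfc (fun t => h t * k t) ((adjoint T) ∘L T) u
      = cfc h ((adjoint T) ∘L T) (cfc k ((adjoint T) ∘L T) u) := by
  have hs := A_spec T hT
  rw [cfc_mul h k _ (hh.mono hs) (hk.mono hs)]
  rfl

lemma cfc_sq (T : X →L[ℂ] Y) (hT : ‖(adjoint T) ∘L T‖ ≤ Real.exp (-1))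
    {h : ℝ → ℝ} (hh : ContinuousOn h II) (u : X) :
    (inner ℂ (cfc (fun t => h t * h t) ((adjoint T) ∘L T) u) u).re
      = ‖cfc h ((adjoint T) ∘L T) u‖ ^ 2 := by
  rw [cfc_mul_apply T hT hh hh, cfc_inner_symm]
  exact inner_self_eq_norm_sq (𝕜 := ℂ) _

lemma cfc_id_apply (T : X →L[ℂ] Y) (u : X) :
    cfc (fun t : ℝ => t) ((adjoint T) ∘L T) u = adjoint T (T u) := by
  rw [cfc_id' ℝ _ (A_sa T)]; rfl

lemma cfc_Tsq (T : X →L[ℂ] Y) (hT : ‖(adjoint T) ∘L T‖ ≤ Real.exp (-1))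
    {h : ℝ → ℝ} (hh : ContinuousOn h II) (u : X) :
    (inner ℂ (cfc (fun t => h t * (t * h t)) ((adjoint T) ∘L T) u) u).re
      = ‖T (cfc h ((adjoint T) ∘L T) u)‖ ^ 2 := by
  rw [cfc_mul_apply T hT (k := fun t => t * h t) hh (continuousOn_id.mul hh), cfc_inner_symm,
    cfc_mul_apply T hT (h := fun t => t) continuousOn_id hh, cfc_id_apply,
    ContinuousLinearMap.adjoint_inner_left]
  exact inner_self_eq_norm_sq (𝕜 := ℂ) _

/-- main quadratic estimate -/
lemma cfc_stab (T : X →L[ℂ] Y) (hT : ‖(adjoint T) ∘L T‖ ≤ Real.exp (-1))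
    {h : ℝ → ℝ} (hh : ContinuousOn h II) (a b : ℝ)
    (hab : ∀ t ∈ II, h t * h t ≤ a + b * (h t * (t * h t))) (u : X) :
    ‖cfc h ((adjoint T) ∘L T) u‖ ^ 2 ≤ a * ‖u‖ ^ 2 + b * ‖T (cfc h ((adjoint T) ∘L T) u)‖ ^ 2 := by
  have hs := A_spec T hT
  have hc : ContinuousOn (fun t => h t * (t * h t)) II := hh.mul (continuousOn_id.mul hh)
  have h1 := cfc_quad_mono T hT (h := fun t => h t * h t)
    (k := fun t => a + b * (h t * (t * h t))) (hh.mul hh)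
    ((continuousOn_const (c := a)).add ((continuousOn_const (c := b)).mul hc)) hab u
  rw [cfc_sq T hT hh, cfc_add (f := fun _ => a) (g := fun t => b * (h t * (t * h t)))
    (hf := continuousOn_const) (hg := (continuousOn_const.mul hc).mono hs),
    cfc_const _ _ (A_sa T), cfc_const_mul _ _ _ (hc.mono hs)] at h1
  rw [← cfc_Tsq T hT hh]
  have h2 : (inner ℂ u u).re = ‖u‖ ^ 2 := inner_self_eq_norm_sq (𝕜 := ℂ) _
  rw [← h2]
  refine h1.trans (le_of_eq ?_)
  simp [Algebra.algebraMap_eq_smul_one, ← Complex.coe_smul]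
  ring

lemma cfc_Tbound (T : X →L[ℂ] Y) (hT : ‖(adjoint T) ∘L T‖ ≤ Real.exp (-1))
    {h : ℝ → ℝ} (hh : ContinuousOn h II) (a : ℝ)
    (hab : ∀ t ∈ II, h t * (t * h t) ≤ a) (u : X) :
    ‖T (cfc h ((adjoint T) ∘L T) u)‖ ^ 2 ≤ a * ‖u‖ ^ 2 := by
  have hc : ContinuousOn (fun t => h t * (t * h t)) II := hh.mul (continuousOn_id.mul hh)
  have h1 := cfc_quad_mono T hT hc (continuousOn_const (c := a)) hab u
  rw [cfc_Tsq T hT hh, cfc_const _ _ (A_sa T)] at h1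
  have h2 : (inner ℂ u u).re = ‖u‖ ^ 2 := inner_self_eq_norm_sq (𝕜 := ℂ) _
  rw [← h2]
  refine h1.trans (le_of_eq ?_)
  simp [Algebra.algebraMap_eq_smul_one, ← Complex.coe_smul]
  ring

/-- noise propagation -/
lemma cfc_adj_bound (T : X →L[ℂ] Y) (hT : ‖(adjoint T) ∘L T‖ ≤ Real.exp (-1))
    {g : ℝ → ℝ} (hg : ContinuousOn g II) (M : ℝ) (hM : 0 ≤ M)
    (hab : ∀ t ∈ II, g t * (t * g t) ≤ M ^ 2) (e : Y) :
    ‖cfc g ((adjoint T) ∘L T) (adjoint T e)‖ ≤ M * ‖e‖ := by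
  set v := cfc g ((adjoint T) ∘L T) (adjoint T e) with hv
  have h1 : ‖T (cfc g ((adjoint T) ∘L T) v)‖ ≤ M * ‖v‖ := by
    have := cfc_Tbound T hT hg _ hab v
    rw [← mul_pow] at this
    exact le_of_sq_le_sq this (by positivity)
  have h2 : ‖v‖ ^ 2 = (inner ℂ e (T (cfc g ((adjoint T) ∘L T) v))).re := by
    rw [← ContinuousLinearMap.adjoint_inner_left, ← cfc_inner_symm, ← hv]
    exact (inner_self_eq_norm_sq (𝕜 := ℂ) _).symm
  have h3 := (Complex.re_le_norm _).trans (norm_inner_le_norm (𝕜 := ℂ) e (T (cfc g ((adjoint T) ∘L T) v)))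
  rw [← h2] at h3
  rcases (norm_nonneg v).eq_or_lt with h0 | h0
  · rw [← h0]; positivity
  · have := h3.trans (mul_le_mul_of_nonneg_left h1 (norm_nonneg e))
    nlinarith

/-- the residual operator on Y is a contraction -/
lemma res_contr (T : X →L[ℂ] Y) (hT : ‖(adjoint T) ∘L T‖ ≤ Real.exp (-1))
    {g : ℝ → ℝ} (hg : ContinuousOn g II) 
    (hg0 : ∀ t ∈ II, 0 ≤ g t) (hg1 : ∀ t ∈ II, t * g t ≤ 1) (e : Y) :
    ‖T (cfc g ((adjoint T) ∘L T) (adjoint T e)) - e‖ ≤ ‖e‖ := by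
  have hc : ContinuousOn (fun t => g t * (t * g t)) II := hg.mul (continuousOn_id.mul hg)
  have h1 := cfc_quad_mono T hT hc hg
    (fun t ht => mul_le_of_le_one_right (hg0 t ht) (hg1 t ht)) (adjoint T e)
  have h0 := cfc_quad_mono T hT (continuousOn_const (c := 0)) hg hg0 (adjoint T e)
  rw [cfc_const_zero] at h0
  simp only [_root_.zero_apply, inner_zero_left, Complex.zero_re] at h0
  rw [cfc_Tsq T hT hg] at h1
  refine le_of_sq_le_sq ?_ (norm_nonneg e)
  have h3 := norm_sub_sq (𝕜 := ℂ) (T (cfc g ((adjoint T) ∘L T) (adjoint T e))) e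
  rw [← ContinuousLinearMap.adjoint_inner_right, RCLike.re_to_complex] at h3
  linarith

lemma cfc_res (T : X →L[ℂ] Y) (hT : ‖(adjoint T) ∘L T‖ ≤ Real.exp (-1))
    {g : ℝ → ℝ} (hg : ContinuousOn g II) (x : X) :
    cfc (fun t => 1 - t * g t) ((adjoint T) ∘L T) x
      = x - cfc g ((adjoint T) ∘L T) (adjoint T (T x)) := by
  have hs := A_spec T hT
  have e : (fun t => 1 - t * g t) = fun t => 1 - g t * t := by funext t; ring
  rw [e, cfc_sub (f := fun _ => 1) (g := fun t => g t * t) (hf := continuousOn_const)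
    (hg := (hg.mul continuousOn_id).mono hs), cfc_const_one ℝ _ (A_sa T), _root_.sub_apply,
    cfc_mul_apply T hT hg (k := fun t => t) continuousOn_id, cfc_id_apply]
  rfl

end helpers

section scalars

lemma fp_cont (p : ℝ) (hp : 0 < p) : ContinuousOn (fpFun p) II := by
  intro t ht
  rcases ht.1.eq_or_lt with h0 | h0
  · subst h0
    refine ContinuousAt.continuousWithinAt ?_
    rw [← continuousWithinAt_compl_self]
    have h1 : Filter.Tendsto (fun t : ℝ => -Real.log t) (nhdsWithin 0 {0}ᶜ) Filter.atTop :=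
      Filter.tendsto_neg_atBot_atTop.comp Real.tendsto_log_nhdsNE_zero
    have h2 := (tendsto_rpow_neg_atTop hp).comp h1
    have h3 : fpFun p 0 = 0 := by
      simp [fpFun, Real.zero_rpow (neg_ne_zero.2 hp.ne')]
    unfold ContinuousWithinAt
    rw [h3]
    exact h2
  · refine ContinuousAt.continuousWithinAt ?_
    have h1 : Real.log t ≤ -1 := by
      rw [← Real.log_exp (-1)]; exact Real.log_le_log h0 ht.2
    unfold fpFun
    refine ContinuousAt.rpow_const (Real.continuousAt_log h0.ne').neg (Or.inl (by linarith))

lemma gen_cont (α : ℝ) (hα : 0 < α) : ContinuousOn (genFun α) II := by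
  have hs : 0 < Real.sqrt α := Real.sqrt_pos.2 hα
  intro t ht
  rcases ht.1.eq_or_lt with h0 | h0
  · subst h0
    refine ContinuousAt.continuousWithinAt ?_
    rw [← continuousWithinAt_compl_self]
    have h1 : Filter.Tendsto (fun t : ℝ => Real.exp (Real.sqrt α * Real.log t))
        (nhdsWithin 0 {0}ᶜ) (nhds 0) :=
      Real.tendsto_exp_atBot.comp (Real.tendsto_log_nhdsNE_zero.const_mul_atBot hs)
    have h2 : Filter.Tendsto (fun t : ℝ => t) (nhdsWithin 0 {0}ᶜ) (nhds 0) :=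
      tendsto_nhdsWithin_of_tendsto_nhds Filter.tendsto_id
    have h3 : Filter.Tendsto (fun t : ℝ => 1 / (t + (1 - Real.exp (Real.sqrt α * Real.log t)) ^ 2))
        (nhdsWithin 0 {0}ᶜ) (nhds (1 / (0 + (1 - 0) ^ 2))) :=
      (tendsto_const_nhds).div (h2.add ((tendsto_const_nhds.sub h1).pow 2)) (by norm_num)
    unfold ContinuousWithinAt
    have h4 : genFun α 0 = 1 / (0 + (1 - 0) ^ 2) := by simp [genFun]
    rw [h4]
    refine h3.congr' ?_
    filter_upwards [self_mem_nhdsWithin] with x hx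
    have hx' : x ≠ 0 := hx
    simp [genFun, hx']
  · refine ContinuousAt.continuousWithinAt ?_
    have h1 : ContinuousAt (fun t : ℝ => 1 / (t + (1 - Real.exp (Real.sqrt α * Real.log t)) ^ 2)) t := by
      refine continuousAt_const.div (continuousAt_id.add ((continuousAt_const.sub
        (Real.continuous_exp.continuousAt.comp
          (continuousAt_const.mul (Real.continuousAt_log h0.ne')))).pow 2)) ?_
      have : 0 < t + (1 - Real.exp (Real.sqrt α * Real.log t)) ^ 2 := by positivity
      exact this.ne'
    refine h1.congr ?_
    filter_upwards [lt_mem_nhds h0] with x hx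
    simp [genFun, hx.ne']

lemma gen_pos (α t : ℝ) (ht : t ∈ II) : 0 ≤ genFun α t := by
  have := ht.1
  unfold genFun
  split_ifs <;> positivity

lemma gen_le (α t : ℝ) (ht : t ∈ II) : t * genFun α t ≤ 1 := by
  rcases ht.1.eq_or_lt with h0 | h0
  · rw [← h0]; simp
  · simp only [genFun, h0.ne', if_false, mul_one_div]
    rw [div_le_one (by positivity)]
    nlinarith [sq_nonneg (1 - Real.exp (Real.sqrt α * Real.log t))]

lemma log_le (t : ℝ) (h0 : 0 < t) (ht : t ∈ II) : Real.log t ≤ -1 := by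
  rw [← Real.log_exp (-1)]; exact Real.log_le_log h0 ht.2

lemma fp_nonneg (p t : ℝ) (ht : t ∈ II) : 0 ≤ fpFun p t := by
  rcases ht.1.eq_or_lt with h0 | h0
  · rw [← h0]; simp only [fpFun, Real.log_zero, neg_zero]; exact Real.rpow_nonneg le_rfl _
  · have := log_le t h0 ht
    exact Real.rpow_nonneg (by linarith) _

lemma fp_le_one (p t : ℝ) (hp : 0 < p) (ht : t ∈ II) : fpFun p t ≤ 1 := by
  rcases ht.1.eq_or_lt with h0 | h0
  · rw [← h0]; simp [fpFun, Real.zero_rpow (neg_ne_zero.2 hp.ne')]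
  · have := log_le t h0 ht
    exact Real.rpow_le_one_of_one_le_of_nonpos (by linarith) (by linarith)

lemma fp_le (p t τ : ℝ) (hp : 0 < p) (ht : t ∈ II) (hτ : t ≤ τ) (h1 : τ < 1) :
    fpFun p t ≤ (-Real.log τ) ^ (-p) := by
  rcases ht.1.eq_or_lt with h0 | h0
  · rw [← h0]
    simp only [fpFun, Real.log_zero, neg_zero, Real.zero_rpow (neg_ne_zero.2 hp.ne')]
    refine Real.rpow_nonneg ?_ _
    have := Real.log_nonpos (by linarith) h1.le
    linarith
  · have := Real.log_neg (h0.trans_le hτ) h1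
    have := Real.log_le_log h0 hτ
    exact Real.rpow_le_rpow_of_nonpos (by linarith) (by linarith) (by linarith)

lemma gen_noise (α t : ℝ) (hα : 0 < α) (ht : t ∈ II) :
    genFun α t * (t * genFun α t) ≤ ((1 + Real.sqrt α) / (2 * Real.sqrt α)) ^ 2 := by
  have hb : 0 < Real.sqrt α := Real.sqrt_pos.2 hα
  set b := Real.sqrt α with hbd
  rcases ht.1.eq_or_lt with h0 | h0
  · rw [← h0]; simp only [zero_mul, mul_zero]; positivity
  · simp only [genFun, h0.ne', if_false, ← hbd]
    have hl := log_le t h0 ht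
    set s := 1 - Real.exp (b * Real.log t) with hs
    have h1 : Real.exp (b * Real.log t) ≤ 1 / (1 + b) := by
      have h2 : b + 1 ≤ Real.exp b := Real.add_one_le_exp b
      have h3 : Real.exp (b * Real.log t) ≤ Real.exp (-b) :=
        Real.exp_le_exp.2 (by nlinarith)
      rw [Real.exp_neg] at h3
      refine h3.trans ?_
      rw [← one_div]
      exact one_div_le_one_div_of_le (by linarith) (by linarith)
    have h2 : b / (1 + b) ≤ s := by
      have : b / (1 + b) = 1 - 1 / (1 + b) := by field_simp; ring
      rw [hs, this]; linarith
    have hs0 : 0 < s := lt_of_lt_of_le (by positivity) h2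
    have h3 : 1 / (t + s ^ 2) * (t * (1 / (t + s ^ 2))) ≤ (1 / (2 * s)) ^ 2 := by
      have : 1 / (t + s ^ 2) * (t * (1 / (t + s ^ 2))) = t / (t + s ^ 2) ^ 2 := by field_simp
      rw [this, div_pow, div_le_div_iff₀ (by positivity) (by positivity)]
      nlinarith [sq_nonneg (t - s ^ 2)]
    refine h3.trans (pow_le_pow_left₀ (by positivity) ?_ 2)
    rw [div_le_iff₀ (by positivity)] at h2
    rw [div_le_div_iff₀ (by positivity) (by positivity)]
    nlinarith

lemma gen_res (α t : ℝ) (hα : 0 < α) (ht : t ∈ II) :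
    ((1 - t * genFun α t) * (t * (1 - t * genFun α t))) ^ 3 ≤ 2 * α ^ 2 := by
  have hb : 0 < Real.sqrt α := Real.sqrt_pos.2 hα
  have hbb : Real.sqrt α ^ 2 = α := Real.sq_sqrt hα.le
  set b := Real.sqrt α with hbd
  rcases ht.1.eq_or_lt with h0 | h0
  · rw [← h0]; simp; positivity
  · simp only [genFun, h0.ne', if_false, ← hbd]
    have hl := log_le t h0 ht
    set s := 1 - Real.exp (b * Real.log t) with hs
    have hs0 : 0 ≤ s := by
      have : Real.exp (b * Real.log t) ≤ 1 := Real.exp_le_one_iff.2 (by nlinarith)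
      linarith
    have hs1 : s ≤ b * (-Real.log t) := by
      have := Real.add_one_le_exp (b * Real.log t)
      linarith
    have hr : 1 - t * (1 / (t + s ^ 2)) = s ^ 2 / (t + s ^ 2) := by field_simp; ring
    rw [hr]
    set q := s ^ 2 / (t + s ^ 2) * (t * (s ^ 2 / (t + s ^ 2))) with hq
    have hq0 : 0 ≤ q := by positivity
    have hq' : q = t * s ^ 4 / (t + s ^ 2) ^ 2 := by rw [hq]; field_simp
    have hq1 : q ≤ t := by
      rw [hq', div_le_iff₀ (by positivity)]
      nlinarith [mul_nonneg h0.le (sq_nonneg s), mul_pos h0 h0]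
    have hq2 : q ≤ s ^ 2 / 4 := by
      rw [hq', div_le_div_iff₀ (by positivity) (by positivity)]
      nlinarith [mul_nonneg (sq_nonneg s) (sq_nonneg (t - s ^ 2))]
    have hexp : t * (-Real.log t) ^ 4 ≤ 24 := by
      have h := Real.pow_div_factorial_le_exp (-Real.log t) (by linarith) 4
      rw [Real.exp_neg, Real.exp_log h0] at h
      have h24 : ((Nat.factorial 4 : ℕ) : ℝ) = 24 := by norm_num [Nat.factorial]
      rw [h24, div_le_iff₀ (by norm_num)] at h
      calc t * (-Real.log t) ^ 4 ≤ t * (t⁻¹ * 24) := mul_le_mul_of_nonneg_left h h0.le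
        _ = 24 := by field_simp
    have hs4 : s ^ 4 ≤ (b * (-Real.log t)) ^ 4 := pow_le_pow_left₀ hs0 hs1 4
    calc q ^ 3 = q * q ^ 2 := by ring
      _ ≤ t * (s ^ 2 / 4) ^ 2 := by gcongr
      _ = t * s ^ 4 / 16 := by ring
      _ ≤ t * (b * (-Real.log t)) ^ 4 / 16 := by gcongr
      _ = b ^ 4 * (t * (-Real.log t) ^ 4) / 16 := by ring
      _ ≤ b ^ 4 * 24 / 16 := by gcongr
      _ ≤ 2 * b ^ 4 := by nlinarith [pow_pos hb 4]
      _ = 2 * α ^ 2 := by rw [← hbb]; ring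

lemma delta_pow (p : ℝ) : ∃ C > (0:ℝ), ∀ δ ∈ Set.Ioc (0:ℝ) (Real.exp (-1)),
    δ ^ (1/4 : ℝ) ≤ C * (-Real.log δ) ^ (-p) := by
  obtain ⟨n, hn⟩ := exists_nat_ge p
  refine ⟨4 ^ n * n.factorial, by positivity, fun δ hδ => ?_⟩
  have hl := log_le δ hδ.1 ⟨hδ.1.le, hδ.2⟩
  set l := -Real.log δ with hld
  have hl0 : 0 < l := by linarith
  have h1 : δ ^ (1/4 : ℝ) = (Real.exp (l / 4))⁻¹ := by
    rw [Real.rpow_def_of_pos hδ.1, ← Real.exp_neg]; congr 1; rw [hld]; ring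
  have h2 := Real.pow_div_factorial_le_exp (l / 4) (by positivity) n
  have h3 : l ^ p ≤ l ^ n := by
    rw [← Real.rpow_natCast]
    exact Real.rpow_le_rpow_of_exponent_le (by linarith) hn
  rw [h1, Real.rpow_neg hl0.le, ← div_eq_mul_inv, inv_le_comm₀ (by positivity) (by positivity),
    inv_div]
  refine le_trans ?_ h2
  rw [div_pow, div_div]
  gcongr

end scalars

lemma exp_m1_lt : Real.exp (-1) < 1 := by
  rw [← Real.exp_zero]; exact Real.exp_lt_exp.2 (by norm_num)

set_option maxHeartbeats 2000000

/-- Let `p > 0`, `ρ > 0`, and `x† = f_p(T*T)w` with `‖w‖ ≤ ρ`, where `T` is a bounded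
injective operator between complex Hilbert spaces with `‖T*T‖ ≤ e⁻¹`. There exist
`C > 0` and `δ̄ ∈ (0,1)` such that for every `δ ∈ (0,δ̄]`: if `y^δ` satisfies
`‖y^δ − T x†‖ ≤ δ` and `α > 0` is such that `‖T x_α^δ − y^δ‖ ≤ δ + √δ` while
`‖T x_{α'}^δ − y^δ‖ > δ + √δ` for every `α' > α` (i.e. `α` is the supremum in the
Morozov-like discrepancy rule), where `x_β^δ = g_β(T*T)T*y^δ`, then
`‖x† − x_α^δ‖ ≤ C·(−log δ)^{−p}`. -/
theorem stmt11 {X Y : Type*} [NormedAddCommGroup X] [InnerProductSpace ℂ X]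
    [CompleteSpace X] [NormedAddCommGroup Y] [InnerProductSpace ℂ Y] [CompleteSpace Y]
    (T : X →L[ℂ] Y) (hTinj : Function.Injective T)
    (hTnorm : ‖(adjoint T) ∘L T‖ ≤ Real.exp (-1))
    (p ρ : ℝ) (hp : 0 < p) (hρ : 0 < ρ)
    (w : X) (hw : ‖w‖ ≤ ρ) (xdag : X) (hxdag : xdag = cfc (fpFun p) ((adjoint T) ∘L T) w) :
    ∃ C > (0 : ℝ), ∃ δbar ∈ Set.Ioo (0 : ℝ) 1, ∀ δ ∈ Set.Ioc (0 : ℝ) δbar, ∀ yδ : Y,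
      ‖yδ - T xdag‖ ≤ δ → ∀ α > (0 : ℝ),
        ‖T (cfc (genFun α) ((adjoint T) ∘L T) ((adjoint T) yδ)) - yδ‖ ≤ δ + Real.sqrt δ →
        (∀ α' > α,
          ‖T (cfc (genFun α') ((adjoint T) ∘L T) ((adjoint T) yδ)) - yδ‖ > δ + Real.sqrt δ) →
        ‖xdag - cfc (genFun α) ((adjoint T) ∘L T) ((adjoint T) yδ)‖ ≤
          C * (-Real.log δ) ^ (-p) := by
  obtain ⟨C0, hC0, hC0'⟩ := delta_pow p
  refine ⟨2 ^ p * ρ + (4 + (1 + 32 * ρ ^ 6)) * C0, by positivity, Real.exp (-1),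
    ⟨Real.exp_pos _, exp_m1_lt⟩, ?_⟩
  intro δ hδ y hy α hα hres hres'
  have hδ0 := hδ.1
  have hδ1 : δ < 1 := hδ.2.trans_lt (exp_m1_lt)
  have hl := log_le δ hδ0 ⟨hδ0.le, hδ.2⟩
  set A := (adjoint T) ∘L T with hA
  set e := y - T xdag with he
  set f := fpFun p with hf
  have hfc : ContinuousOn f II := fp_cont p hp
  have hrc : ∀ β > 0, ContinuousOn (fun t => 1 - t * genFun β t) II := fun β hβ =>
    continuousOn_const.sub (continuousOn_id.mul (gen_cont β hβ))
  have hz : ∀ β > 0, xdag - cfc (genFun β) A (adjoint T (T xdag))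
      = cfc (fun t => (1 - t * genFun β t) * f t) A w := by
    intro β hβ
    rw [cfc_mul_apply T hTnorm (h := fun t => 1 - t * genFun β t) (hrc β hβ) hfc, ← hA, ← hxdag,
      cfc_res T hTnorm (gen_cont β hβ)]
  have hzc : ∀ β > 0, ContinuousOn (fun t => (1 - t * genFun β t) * f t) II := fun β hβ =>
    (hrc β hβ).mul hfc
  have hr01 : ∀ β, ∀ t ∈ II, 0 ≤ 1 - t * genFun β t ∧ 1 - t * genFun β t ≤ 1 := by
    intro β t ht
    have h1 := gen_le β t ht
    have h2 := mul_nonneg ht.1 (gen_pos β t ht)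
    constructor <;> linarith
  have hye : adjoint T y = adjoint T (T xdag) + adjoint T e := by
    rw [← map_add, he]; congr 1; abel
  have hident : ∀ β > 0, T (cfc (genFun β) A (adjoint T y)) - y
      = (T (cfc (genFun β) A (adjoint T e)) - e)
        - T (cfc (fun t => (1 - t * genFun β t) * f t) A w) := by
    intro β hβ
    have h1 : y = e + T xdag := by rw [he]; abel
    rw [← hz β hβ, hye, map_add, map_add, map_sub T]
    have h2 : ∀ a b : Y, a + b - y = b - e - (T xdag - a) := by
      intro a b; rw [h1]; abel
    exact h2 _ _
  have hcontr : ∀ β > 0, ‖T (cfc (genFun β) A (adjoint T e)) - e‖ ≤ δ := fun β hβ =>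
    (res_contr T hTnorm (gen_cont β hβ) (gen_pos β) (gen_le β) e).trans hy
  have hsq : Real.sqrt δ ^ 2 = δ := Real.sq_sqrt hδ0.le
  have hsp : 0 < Real.sqrt δ := Real.sqrt_pos.2 hδ0
  have hs1 : Real.sqrt δ < 1 := by nlinarith
  have hδs : δ ≤ Real.sqrt δ := by nlinarith
  -- quarter power
  set q := δ ^ (1/4 : ℝ) with hq
  have hq0 : 0 < q := Real.rpow_pos_of_pos hδ0 _
  have hq4 : q ^ 4 = δ := by
    rw [hq, ← Real.rpow_natCast, ← Real.rpow_mul hδ0.le]; norm_num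
  have hq2 : q ^ 2 = Real.sqrt δ := by
    rw [eq_comm, Real.sqrt_eq_iff_mul_self_eq hδ0.le (by positivity), ← hq4]; ring
  have hq1 : q ≤ 1 := Real.rpow_le_one hδ0.le hδ1.le (by norm_num)
  -- approximation error
  set z := cfc (fun t => (1 - t * genFun α t) * f t) A w with hzdef
  have hTz : ‖T z‖ ≤ 3 * Real.sqrt δ := by
    have h1 : T z = (T (cfc (genFun α) A (adjoint T e)) - e)
        - (T (cfc (genFun α) A (adjoint T y)) - y) := by
      rw [hident α hα, sub_sub_cancel]
    rw [h1]
    refine (norm_sub_le _ _).trans ?_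
    linarith [hcontr α hα]
  set l := (-Real.log δ) ^ (-p) with hld
  have hl0 : 0 < l := Real.rpow_pos_of_pos (by linarith) _
  have hlog : (-Real.log (Real.sqrt δ)) ^ (-p) = 2 ^ p * l := by
    rw [Real.log_sqrt hδ0.le, ← neg_div, Real.div_rpow (by linarith) (by norm_num),
      Real.rpow_neg (by norm_num : (0:ℝ) ≤ 2), div_inv_eq_mul, mul_comm]
  have h2p : (0:ℝ) < 2 ^ p := Real.rpow_pos_of_pos (by norm_num) _
  have hzb : ‖z‖ ≤ 2 ^ p * ρ * l + 3 * q := by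
    have h1 := cfc_stab T hTnorm (hzc α hα) ((2 ^ p * l) ^ 2) (1 / Real.sqrt δ) (by
      intro t ht
      obtain ⟨hr0, hr1⟩ := hr01 α t ht
      have hf0 : 0 ≤ f t := fp_nonneg p t ht
      have ht0 := ht.1
      set r := 1 - t * genFun α t
      rcases le_total t (Real.sqrt δ) with h | h
      · have h2 : f t ≤ 2 ^ p * l := by
          rw [← hlog]; exact fp_le p t _ hp ht h hs1
        have h3 : r * f t ≤ 2 ^ p * l := (mul_le_of_le_one_left hf0 hr1).trans h2
        have h4 : r * f t * (r * f t) ≤ (2 ^ p * l) ^ 2 := by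
          rw [← sq]; exact pow_le_pow_left₀ (by positivity) h3 2
        have h5 : 0 ≤ 1 / Real.sqrt δ * (r * f t * (t * (r * f t))) := by positivity
        linarith
      · have h2 : 1 ≤ t / Real.sqrt δ := (one_le_div hsp).2 h
        have h3 : 1 / Real.sqrt δ * (r * f t * (t * (r * f t)))
          = (r * f t * (r * f t)) * (t / Real.sqrt δ) := by ring
        have h4 : r * f t * (r * f t) ≤ (r * f t * (r * f t)) * (t / Real.sqrt δ) :=
          le_mul_of_one_le_right (by positivity) h2
        rw [h3]
        have : 0 ≤ (2 ^ p * l) ^ 2 := by positivity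
        linarith) w
    rw [← hA, ← hzdef] at h1
    have h2 : ‖T z‖ ^ 2 ≤ 9 * δ := by
      have := pow_le_pow_left₀ (norm_nonneg _) hTz 2
      rw [mul_pow, hsq] at this
      linarith
    have h3 : 1 / Real.sqrt δ * ‖T z‖ ^ 2 ≤ 9 * q ^ 2 := by
      rw [one_div, inv_mul_le_iff₀ hsp, hq2]
      nlinarith
    have h4 : ‖w‖ ^ 2 ≤ ρ ^ 2 := pow_le_pow_left₀ (norm_nonneg _) hw 2
    have h5 : (2 ^ p * l) ^ 2 * ‖w‖ ^ 2 ≤ (2 ^ p * l) ^ 2 * ρ ^ 2 := by gcongr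
    refine le_of_sq_le_sq ?_ (by positivity)
    have h6 : 0 ≤ 2 ^ p * ρ * l * q := by positivity
    nlinarith
  -- lower bound for α
  have hlow : δ ^ 3 ≤ 32 * α ^ 2 * ρ ^ 6 := by
    have h4 : (0:ℝ) < 4 * α := by linarith
    have h1 := hres' (4 * α) (by linarith)
    rw [hident _ h4] at h1
    have h2 : Real.sqrt δ < ‖T (cfc (fun t => (1 - t * genFun (4 * α) t) * f t) A w)‖ := by
      have := norm_sub_le (T (cfc (genFun (4 * α)) A (adjoint T e)) - e)
        (T (cfc (fun t => (1 - t * genFun (4 * α) t) * f t) A w))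
      linarith [hcontr _ h4]
    set M := (2 * (4 * α) ^ 2) ^ (1/3 : ℝ) with hM
    have hM0 : 0 < M := Real.rpow_pos_of_pos (by positivity) _
    have hM3 : M ^ 3 = 2 * (4 * α) ^ 2 := by
      rw [hM, ← Real.rpow_natCast, ← Real.rpow_mul (by positivity)]; norm_num
    have h3 := cfc_Tbound T hTnorm (hzc _ h4) M (by
      intro t ht
      obtain ⟨hr0, hr1⟩ := hr01 (4 * α) t ht
      have h := gen_res (4 * α) t h4 ht
      have hf0 : 0 ≤ f t := fp_nonneg p t ht
      have hf1 : f t ≤ 1 := fp_le_one p t hp ht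
      have ht0 := ht.1
      set r := 1 - t * genFun (4 * α) t
      have h5 : r * (t * r) ≤ M := by
        refine le_of_pow_le_pow_left₀ (n := 3) (by norm_num) hM0.le ?_
        rw [hM3]; exact h
      have h6 : f t * f t ≤ 1 := mul_le_one₀ hf1 hf0 hf1
      calc r * f t * (t * (r * f t)) = (r * (t * r)) * (f t * f t) := by ring
        _ ≤ r * (t * r) := mul_le_of_le_one_right (by positivity) h6
        _ ≤ M := h5) w
    rw [← hA] at h3
    have h5 : δ ≤ M * ρ ^ 2 := by
      have h6 := pow_le_pow_left₀ hsp.le h2.le 2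
      rw [hsq] at h6
      refine h6.trans (h3.trans ?_)
      gcongr
    have h6 := pow_le_pow_left₀ hδ0.le h5 3
    rw [mul_pow, hM3] at h6
    refine h6.trans (le_of_eq (by ring))
  -- noise
  have hb : 0 < Real.sqrt α := Real.sqrt_pos.2 hα
  have hbb : Real.sqrt α ^ 2 = α := Real.sq_sqrt hα.le
  have hnoise := cfc_adj_bound T hTnorm (gen_cont α hα) ((1 + Real.sqrt α) / (2 * Real.sqrt α))
    (by positivity) (fun t ht => gen_noise α t hα ht) e
  rw [← hA] at hnoise
  have hdb : δ / Real.sqrt α ≤ (1 + 32 * ρ ^ 6) * q := by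
    refine le_of_pow_le_pow_left₀ (n := 4) (by norm_num) (by positivity) ?_
    have hb4 : Real.sqrt α ^ 4 = α ^ 2 := by rw [show Real.sqrt α ^ 4 = (Real.sqrt α ^ 2) ^ 2 by ring, hbb]
    rw [div_pow, hb4, mul_pow, hq4, div_le_iff₀ (by positivity)]
    have hk : 32 * ρ ^ 6 ≤ (1 + 32 * ρ ^ 6) ^ 4 := by
      have : 1 + 32 * ρ ^ 6 ≤ (1 + 32 * ρ ^ 6) ^ 4 :=
        le_self_pow₀ (by have : 0 < ρ ^ 6 := by positivity
                         linarith) (by norm_num)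
      linarith
    calc δ ^ 4 = δ ^ 3 * δ := by ring
      _ ≤ 32 * α ^ 2 * ρ ^ 6 * δ := by gcongr
      _ = 32 * ρ ^ 6 * δ * α ^ 2 := by ring
      _ ≤ (1 + 32 * ρ ^ 6) ^ 4 * δ * α ^ 2 := by gcongr
  have hδq : δ ≤ q := by
    rw [← hq4]; exact pow_le_of_le_one hq0.le hq1 (by norm_num)
  have hn2 : ‖cfc (genFun α) A (adjoint T e)‖ ≤ q + (1 + 32 * ρ ^ 6) * q := by
    refine hnoise.trans ?_
    have h1 : (1 + Real.sqrt α) / (2 * Real.sqrt α) * ‖e‖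
        ≤ (1 + Real.sqrt α) / (2 * Real.sqrt α) * δ := by gcongr
    have h2 : (1 + Real.sqrt α) / (2 * Real.sqrt α) * δ = (δ / Real.sqrt α) / 2 + δ / 2 := by
      field_simp
    have h3 : 0 < δ / Real.sqrt α := by positivity
    linarith
  have hfin : xdag - cfc (genFun α) A (adjoint T y) = z - cfc (genFun α) A (adjoint T e) := by
    rw [hzdef, ← hz α hα, hye, map_add]; abel
  rw [hfin]
  have hqC := hC0' δ hδ
  rw [← hq, ← hld] at hqC
  have hK : 0 ≤ 4 + (1 + 32 * ρ ^ 6) := by positivity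
  calc ‖z - cfc (genFun α) A (adjoint T e)‖
      ≤ ‖z‖ + ‖cfc (genFun α) A (adjoint T e)‖ := norm_sub_le _ _
    _ ≤ 2 ^ p * ρ * l + (4 + (1 + 32 * ρ ^ 6)) * q := by linarith
    _ ≤ 2 ^ p * ρ * l + (4 + (1 + 32 * ρ ^ 6)) * (C0 * l) := by gcongr
    _ = _ := by ring
end
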